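/- Let H ∈ (0,1/2], p > 1 and c > 0. For 0 < ε < 1 define K_ε(t,s) = c·ε^H·(t−s)^{H−1/2}·(−log(ε(t−s)))^{−p} for 0 ≤ s < t ≤ 1 and K_ε(t,s) = 0 for s ≥ t, and let κ(t,s) = c·(t−s)^{H−1/2} for 0 ≤ s < t ≤ 1 (κ(t,s) = 0 for s ≥ t). Then: (i) for every 0 ≤ s < t ≤ 1, lim_{ε→0⁺} ε^{−H}·(−log ε)^{p}·K_ε(t,s) = κ(t,s); (ii) lim_{ε→0⁺} sup_{s,t ∈ [0,1]} | ε^{−2H}·(−log ε)^{2p}·∫_0^{min(s,t)} K_ε(t,u)·K_ε(s,u) du − ∫_0^{min(s,t)} κ(t,u)·κ(s,u) du | = 0. -/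

import Mathlib

/-!
Write `L = -log ε`. For `0 < x ≤ 1` one has `-log (ε x) = L - log x ≥ L`, so that
`ε^{-H} L^p K_ε(t,u) = κ(t,u) · r_L(t-u)` with `r_L(x) = (L / (L - log x))^p ∈ (0,1]`.
Bernoulli's inequality gives `1 - r_L(x) ≤ p (-log x) / L` (`one_sub_le_logRatio`), and the
pointwise limit follows as `L → ∞`.

For the uniform statement take `s ≤ t` by symmetry. Since `H ≤ 1/2`, on `u < s` we have
`κ(t,u) ≤ κ(s,u)`, hence the difference of the two integrands is at most
`c² (s-u)^{2H-1} · 2p (-log (s-u)) / L`. The bound `-log x · x^H ≤ 1/H` turns this into the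
integrable majorant `2pc²/(HL) · (s-u)^{H-1}` (`abs_integrand_sub_le`), whose integral over `[0,s]`
is at most `2pc²/(H²L)`. This explicit rate does not depend on `s, t` and tends to `0`
(`abs_cov_sub_le`).
-/

open MeasureTheory Filter

/-- The rescaled log-modulated Riemann–Liouville kernel
`K_ε(t,s) = c ε^H (t-s)^{H-1/2} (-log(ε(t-s)))^{-p}` for `s < t` (and `0` for `s ≥ t`). -/
noncomputable def Klog (c H p ε t s : ℝ) : ℝ :=
  if s < t then c * ε ^ H * (t - s) ^ (H - 1 / 2) * (-Real.log (ε * (t - s))) ^ (-p) else 0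

/-- The Riemann–Liouville kernel `κ(t,s) = c (t-s)^{H-1/2}` for `s < t` (and `0` for `s ≥ t`). -/
noncomputable def kapRL (c H t s : ℝ) : ℝ :=
  if s < t then c * (t - s) ^ (H - 1 / 2) else 0

/-- The factor `(L / (L - log x))^p` by which the kernel rescaled at `ε = exp (-L)` differs from
the Riemann–Liouville kernel at lag `x`. -/
noncomputable def logRatio (p L x : ℝ) : ℝ := (L / (L - Real.log x)) ^ p

lemma logRatio_nonneg {p L x : ℝ} (hL : 0 < L) (hx : 0 < x) (hx1 : x ≤ 1) :
    0 ≤ logRatio p L x := by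
  have := Real.log_nonpos hx.le hx1
  exact Real.rpow_nonneg (div_nonneg hL.le (by linarith)) _

lemma logRatio_le_one {p L x : ℝ} (hp : 1 < p) (hL : 0 < L) (hx : 0 < x) (hx1 : x ≤ 1) :
    logRatio p L x ≤ 1 := by
  have := Real.log_nonpos hx.le hx1
  refine Real.rpow_le_one (div_nonneg hL.le (by linarith)) ?_ (by linarith)
  rw [div_le_one (by linarith)]
  linarith

lemma one_sub_le_logRatio {p L x : ℝ} (hp : 1 < p) (hL : 0 < L) (hx : 0 < x) (hx1 : x ≤ 1) :
    1 - p * (-Real.log x) / L ≤ logRatio p L x := by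
  have hl := Real.log_nonpos hx.le hx1
  have hD : 0 < L - Real.log x := by linarith
  have e : L / (L - Real.log x) = 1 + Real.log x / (L - Real.log x) := by
    field_simp
    ring
  have h1 : -(-Real.log x / L) ≤ Real.log x / (L - Real.log x) := by
    have : -Real.log x / (L - Real.log x) ≤ -Real.log x / L :=
      div_le_div_of_nonneg_left (by linarith) hL (by linarith)
    rw [neg_div] at this
    linarith
  have h2 : -1 ≤ Real.log x / (L - Real.log x) := by
    rw [le_div_iff₀ hD]
    linarith
  have h3 := one_add_mul_self_le_rpow_one_add h2 hp.le
  unfold logRatio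
  rw [e]
  refine le_trans ?_ h3
  have := mul_le_mul_of_nonneg_left h1 (by linarith : (0 : ℝ) ≤ p)
  rw [mul_div_assoc]
  linarith

lemma scaled_Klog_eq {c H p ε t u : ℝ} (hε : 0 < ε) (hε1 : ε < 1) (hu : u < t) (htu : t - u ≤ 1) :
    ε ^ (-H) * (-Real.log ε) ^ p * Klog c H p ε t u
      = kapRL c H t u * logRatio p (-Real.log ε) (t - u) := by
  have hx : 0 < t - u := by linarith
  have hl := Real.log_nonpos hx.le htu
  have hL : 0 < -Real.log ε := by linarith [Real.log_neg hε hε1]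
  have hD : 0 < -Real.log ε - Real.log (t - u) := by linarith
  have e : -Real.log (ε * (t - u)) = -Real.log ε - Real.log (t - u) := by
    rw [Real.log_mul hε.ne' hx.ne']
    ring
  unfold Klog kapRL logRatio
  rw [if_pos hu, if_pos hu, e, Real.div_rpow hL.le hD.le, Real.rpow_neg hD.le, Real.rpow_neg hε.le]
  have := (Real.rpow_pos_of_pos hε H).ne'
  have := (Real.rpow_pos_of_pos hD p).ne'
  field_simp

lemma scaled_Klog_mul_eq {c H p ε s t u : ℝ} (hε : 0 < ε) (hε1 : ε < 1) (hu : 0 ≤ u) (hus : u < s)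
    (hut : u < t) (hs1 : s ≤ 1) (ht1 : t ≤ 1) :
    ε ^ (-(2 * H)) * (-Real.log ε) ^ (2 * p) * (Klog c H p ε t u * Klog c H p ε s u)
      = kapRL c H t u * kapRL c H s u
        * (logRatio p (-Real.log ε) (t - u) * logRatio p (-Real.log ε) (s - u)) := by
  have hL : 0 < -Real.log ε := by linarith [Real.log_neg hε hε1]
  have e1 : ε ^ (-(2 * H)) = ε ^ (-H) * ε ^ (-H) := by
    rw [← Real.rpow_add hε]
    ring_nf
  have e2 : (-Real.log ε) ^ (2 * p) = (-Real.log ε) ^ p * (-Real.log ε) ^ p := by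
    rw [← Real.rpow_add hL]
    ring_nf
  have h1 := scaled_Klog_eq (c := c) (H := H) (p := p) hε hε1 hut (by linarith)
  have h2 := scaled_Klog_eq (c := c) (H := H) (p := p) hε hε1 hus (by linarith)
  rw [e1, e2]
  calc _ = (ε ^ (-H) * (-Real.log ε) ^ p * Klog c H p ε t u)
        * (ε ^ (-H) * (-Real.log ε) ^ p * Klog c H p ε s u) := by ring
    _ = _ := by
      rw [h1, h2]
      ring

lemma kapRL_mul_le {c H s t u : ℝ} (hH : H ≤ 1 / 2) (hus : u < s) (hst : s ≤ t) :
    kapRL c H t u * kapRL c H s u ≤ c ^ 2 * (s - u) ^ (2 * H - 1) := by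
  have ha : 0 < s - u := by linarith
  unfold kapRL
  rw [if_pos (by linarith), if_pos hus]
  have h1 : (t - u) ^ (H - 1 / 2) ≤ (s - u) ^ (H - 1 / 2) :=
    Real.rpow_le_rpow_of_nonpos ha (by linarith) (by linarith)
  have e : (s - u) ^ (2 * H - 1) = (s - u) ^ (H - 1 / 2) * (s - u) ^ (H - 1 / 2) := by
    rw [← Real.rpow_add ha]
    ring_nf
  rw [e]
  have h0 := (Real.rpow_pos_of_pos ha (H - 1 / 2)).le
  have := mul_le_mul_of_nonneg_left h1 (mul_nonneg (sq_nonneg c) h0)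
  linarith

lemma kapRL_nonneg {c H t u : ℝ} (hc : 0 < c) : 0 ≤ kapRL c H t u := by
  unfold kapRL
  split_ifs with h
  · exact mul_nonneg hc.le (Real.rpow_nonneg (by linarith) _)
  · exact le_rfl

lemma abs_integrand_sub_le {c H p ε s t u : ℝ} (hH0 : 0 < H) (hH : H ≤ 1 / 2) (hp : 1 < p)
    (hc : 0 < c) (hε : 0 < ε) (hε1 : ε < 1) (hu : 0 ≤ u) (hus : u < s) (hst : s ≤ t)
    (ht1 : t ≤ 1) :
    |ε ^ (-(2 * H)) * (-Real.log ε) ^ (2 * p) * (Klog c H p ε t u * Klog c H p ε s u)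
      - kapRL c H t u * kapRL c H s u|
      ≤ 2 * p * c ^ 2 / (H * (-Real.log ε)) * (s - u) ^ (H - 1) := by
  have hL : 0 < -Real.log ε := by linarith [Real.log_neg hε hε1]
  rw [scaled_Klog_mul_eq hε hε1 hu hus (by linarith) (by linarith) ht1]
  set L := -Real.log ε
  have ha : 0 < s - u := by linarith
  have ha1 : s - u ≤ 1 := by linarith
  have hb : 0 < t - u := by linarith
  have hb1 : t - u ≤ 1 := by linarith
  have ra0 := logRatio_nonneg (p := p) hL ha ha1
  have rb0 := logRatio_nonneg (p := p) hL hb hb1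
  have ra1 := logRatio_le_one hp hL ha ha1
  have rb1 := logRatio_le_one hp hL hb hb1
  have ra2 := one_sub_le_logRatio hp hL ha ha1
  have rb2 := one_sub_le_logRatio hp hL hb hb1
  set ra := logRatio p L (s - u)
  set rb := logRatio p L (t - u)
  have hlog : Real.log (s - u) ≤ Real.log (t - u) := Real.log_le_log ha (by linarith)
  have hmono : p * (-Real.log (t - u)) / L ≤ p * (-Real.log (s - u)) / L := by
    gcongr
  have hk0 : 0 ≤ kapRL c H t u * kapRL c H s u := mul_nonneg (kapRL_nonneg hc) (kapRL_nonneg hc)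
  have hk := kapRL_mul_le (c := c) hH hus hst
  have hr1 : rb * ra ≤ 1 := mul_le_one₀ rb1 ra0 ra1
  have hr2 : 1 - rb * ra ≤ 2 * (p * (-Real.log (s - u)) / L) := by nlinarith
  have hy : -Real.log (s - u) ≤ (s - u) ^ (-H) / H := by
    have h := Real.log_le_rpow_div (x := (s - u)⁻¹) (inv_nonneg.mpr ha.le) hH0
    rwa [Real.log_inv, Real.inv_rpow ha.le, ← Real.rpow_neg ha.le] at h
  have hr3 : 1 - rb * ra ≤ 2 * (p * ((s - u) ^ (-H) / H) / L) := by
    refine hr2.trans ?_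
    gcongr
  rw [abs_sub_comm, abs_of_nonneg (by nlinarith)]
  have e : (s - u) ^ (H - 1) = (s - u) ^ (2 * H - 1) * (s - u) ^ (-H) := by
    rw [← Real.rpow_add ha]
    ring_nf
  calc _ = kapRL c H t u * kapRL c H s u * (1 - rb * ra) := by ring
    _ ≤ c ^ 2 * (s - u) ^ (2 * H - 1) * (2 * (p * ((s - u) ^ (-H) / H) / L)) :=
        mul_le_mul hk hr3 (by linarith) (hk0.trans hk)
    _ = _ := by
      rw [e]
      field_simp

lemma measurable_kapRL {c H t : ℝ} : Measurable (kapRL c H t) := by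
  unfold kapRL
  exact Measurable.ite measurableSet_Iio (by fun_prop) (by fun_prop)

lemma measurable_Klog {c H p ε t : ℝ} : Measurable (Klog c H p ε t) := by
  unfold Klog
  exact Measurable.ite measurableSet_Iio (by fun_prop) (by fun_prop)

lemma intervalIntegrable_sub_rpow {s r : ℝ} (hr : -1 < r) :
    IntervalIntegrable (fun u => (s - u) ^ r) volume 0 s := by
  have h := (intervalIntegral.intervalIntegrable_rpow' (a := 0) (b := s) hr).comp_sub_left s
  simpa using h.symm

lemma integral_sub_rpow {s H : ℝ} (hH : 0 < H) :
    ∫ u in (0 : ℝ)..s, (s - u) ^ (H - 1) = s ^ H / H := by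
  rw [intervalIntegral.integral_comp_sub_left (fun x => x ^ (H - 1)) s,
    integral_rpow (Or.inl (by linarith))]
  simp [hH.ne']

/-- The rescaled covariance differs from the Riemann–Liouville one by `O(1 / log (1/ε))`,
uniformly in the two times; here for ordered times. -/
lemma abs_cov_sub_le {c H p ε s t : ℝ} (hH0 : 0 < H) (hH : H ≤ 1 / 2) (hp : 1 < p)
    (hc : 0 < c) (hε : 0 < ε) (hε1 : ε < 1) (hs : 0 ≤ s) (hst : s ≤ t) (ht1 : t ≤ 1) :
    |(ε ^ (-(2 * H)) * (-Real.log ε) ^ (2 * p) *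
        ∫ u in (0 : ℝ)..s, Klog c H p ε t u * Klog c H p ε s u)
      - ∫ u in (0 : ℝ)..s, kapRL c H t u * kapRL c H s u|
      ≤ 2 * p * c ^ 2 / H ^ 2 * (-Real.log ε)⁻¹ := by
  have hL : 0 < -Real.log ε := by linarith [Real.log_neg hε hε1]
  have hdom : IntervalIntegrable (fun u => c ^ 2 * (s - u) ^ (2 * H - 1)) volume 0 s :=
    (intervalIntegrable_sub_rpow (by linarith)).const_mul _
  -- The endpoint `u = s`, where the majorants take junk values, is a null set.
  have hne : ∀ᵐ u : ℝ, u ≠ s := by simp [ae_iff]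
  have hκ : IntervalIntegrable (fun u => kapRL c H t u * kapRL c H s u) volume 0 s := by
    refine hdom.mono_fun' (measurable_kapRL.mul measurable_kapRL).aestronglyMeasurable ?_
    rw [Set.uIoc_of_le hs, EventuallyLE, ae_restrict_iff' measurableSet_Ioc]
    filter_upwards [hne] with u hu hmem
    rw [Real.norm_of_nonneg (mul_nonneg (kapRL_nonneg hc) (kapRL_nonneg hc))]
    exact kapRL_mul_le hH (lt_of_le_of_ne hmem.2 hu) hst
  have hK : IntervalIntegrable (fun u => ε ^ (-(2 * H)) * (-Real.log ε) ^ (2 * p) *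
      (Klog c H p ε t u * Klog c H p ε s u)) volume 0 s := by
    refine hdom.mono_fun'
      ((measurable_Klog.mul measurable_Klog).const_mul _).aestronglyMeasurable ?_
    rw [Set.uIoc_of_le hs, EventuallyLE, ae_restrict_iff' measurableSet_Ioc]
    filter_upwards [hne] with u hu hmem
    have hus := lt_of_le_of_ne hmem.2 hu
    have hu0 := hmem.1
    rw [scaled_Klog_mul_eq hε hε1 hu0.le hus (by linarith) (by linarith) ht1]
    have hk0 : 0 ≤ kapRL c H t u * kapRL c H s u :=
      mul_nonneg (kapRL_nonneg hc) (kapRL_nonneg hc)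
    have ra0 := logRatio_nonneg (p := p) hL (x := s - u) (by linarith) (by linarith)
    have rb0 := logRatio_nonneg (p := p) hL (x := t - u) (by linarith) (by linarith)
    have ra1 := logRatio_le_one hp hL (x := s - u) (by linarith) (by linarith)
    have rb1 := logRatio_le_one hp hL (x := t - u) (by linarith) (by linarith)
    rw [Real.norm_of_nonneg (mul_nonneg hk0 (mul_nonneg rb0 ra0))]
    exact (mul_le_of_le_one_right hk0 (mul_le_one₀ rb1 ra0 ra1)).trans
      (kapRL_mul_le hH hus hst)
  rw [← intervalIntegral.integral_const_mul, ← intervalIntegral.integral_sub hK hκ,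
    ← Real.norm_eq_abs]
  refine (intervalIntegral.norm_integral_le_of_norm_le hs
    (g := fun u => 2 * p * c ^ 2 / (H * (-Real.log ε)) * (s - u) ^ (H - 1)) ?_
    ((intervalIntegrable_sub_rpow (by linarith)).const_mul _)).trans ?_
  · filter_upwards [hne] with u hu hmem
    rw [Real.norm_eq_abs]
    exact abs_integrand_sub_le hH0 hH hp hc hε hε1 hmem.1.le (lt_of_le_of_ne hmem.2 hu) hst ht1
  · rw [intervalIntegral.integral_const_mul, integral_sub_rpow hH0]
    have h1 : s ^ H ≤ 1 := Real.rpow_le_one hs (by linarith) hH0.le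
    calc _ ≤ 2 * p * c ^ 2 / (H * (-Real.log ε)) * (1 / H) := by gcongr
      _ = _ := by field_simp

lemma tendsto_inv_neg_log :
    Tendsto (fun ε : ℝ => (-Real.log ε)⁻¹) (nhdsWithin (0 : ℝ) (Set.Ioi 0)) (nhds 0) :=
  tendsto_inv_atTop_zero.comp (tendsto_neg_atBot_atTop.comp Real.tendsto_log_nhdsGT_zero)

theorem stmt17 (H p c : ℝ) (hH : H ∈ Set.Ioc (0 : ℝ) (1 / 2)) (hp : 1 < p) (hc : 0 < c) :
    (∀ s t : ℝ, 0 ≤ s → s < t → t ≤ 1 →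
      Tendsto (fun ε : ℝ => ε ^ (-H) * (-Real.log ε) ^ p * Klog c H p ε t s)
        (nhdsWithin (0 : ℝ) (Set.Ioi 0)) (nhds (kapRL c H t s)))
    ∧ Tendsto
        (fun ε : ℝ => ⨆ s : Set.Icc (0 : ℝ) 1, ⨆ t : Set.Icc (0 : ℝ) 1,
          |(ε ^ (-(2 * H)) * (-Real.log ε) ^ (2 * p) *
              ∫ u in (0 : ℝ)..min s.1 t.1, Klog c H p ε t.1 u * Klog c H p ε s.1 u)
            - ∫ u in (0 : ℝ)..min s.1 t.1, kapRL c H t.1 u * kapRL c H s.1 u|)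
        (nhdsWithin (0 : ℝ) (Set.Ioi 0)) (nhds 0) := by
  obtain ⟨hH0, hH2⟩ := hH
  have hev : ∀ᶠ ε : ℝ in nhdsWithin (0 : ℝ) (Set.Ioi 0), ε ∈ Set.Ioo (0 : ℝ) 1 :=
    Ioo_mem_nhdsGT one_pos
  refine ⟨fun s t hs hst ht => ?_, ?_⟩
  · have hx : 0 < t - s := by linarith
    have hx1 : t - s ≤ 1 := by linarith
    have hr : Tendsto (fun ε : ℝ => logRatio p (-Real.log ε) (t - s))
        (nhdsWithin (0 : ℝ) (Set.Ioi 0)) (nhds 1) := by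
      have hlow : Tendsto (fun ε : ℝ => 1 - p * (-Real.log (t - s)) / (-Real.log ε))
          (nhdsWithin (0 : ℝ) (Set.Ioi 0)) (nhds 1) := by
        have := (tendsto_inv_neg_log.const_mul (p * (-Real.log (t - s)))).const_sub 1
        simpa only [mul_zero, sub_zero, div_eq_mul_inv] using this
      refine tendsto_of_tendsto_of_tendsto_of_le_of_le' hlow tendsto_const_nhds ?_ ?_
      · filter_upwards [hev] with ε hε
        exact one_sub_le_logRatio hp (by linarith [Real.log_neg hε.1 hε.2]) hx hx1
      · filter_upwards [hev] with ε hε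
        exact logRatio_le_one hp (by linarith [Real.log_neg hε.1 hε.2]) hx hx1
    have h := hr.const_mul (kapRL c H t s)
    rw [mul_one] at h
    refine h.congr' ?_
    filter_upwards [hev] with ε hε
    exact (scaled_Klog_eq hε.1 hε.2 hst hx1).symm
  · have hup := tendsto_inv_neg_log.const_mul (2 * p * c ^ 2 / H ^ 2)
    rw [mul_zero] at hup
    refine tendsto_of_tendsto_of_tendsto_of_le_of_le' tendsto_const_nhds hup ?_ ?_
    · exact Eventually.of_forall fun ε =>
        Real.iSup_nonneg fun s => Real.iSup_nonneg fun t => abs_nonneg _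
    · filter_upwards [hev] with ε hε
      have hL : 0 < -Real.log ε := by linarith [Real.log_neg hε.1 hε.2]
      have hB : 0 ≤ 2 * p * c ^ 2 / H ^ 2 * (-Real.log ε)⁻¹ := by positivity
      refine Real.iSup_le (fun s => Real.iSup_le (fun t => ?_) hB) hB
      rcases le_total s.1 t.1 with hst | hts
      · rw [min_eq_left hst]
        exact abs_cov_sub_le hH0 hH2 hp hc hε.1 hε.2 s.2.1 hst t.2.2
      · rw [min_eq_right hts]
        have h := abs_cov_sub_le hH0 hH2 hp hc hε.1 hε.2 t.2.1 hts s.2.2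
        simpa only [mul_comm (Klog c H p ε s.1 _), mul_comm (kapRL c H s.1 _)] using h
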